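/- Let G be a 2-tree. If G contains a 4-pyramid as an induced subgraph (equivalently, there is an edge uv with |N_G(u) ∩ N_G(v)| ≥ 4), then G has no Hamiltonian path. -/

import Mathlib

/-! The four common neighbours of the edge `ab` lie in pairwise different components of `G - {a, b}`,
whereas deleting two vertices from a Hamiltonian path leaves at most three segments, each
contained in a single component.

Components are tracked by a labelling `f` of the vertices which is constant along every edge that
avoids `a` and `b`, and which fixes each common neighbour of `a` and `b`. Such a labelling exists by
induction on the construction of the 2-tree (`IsTwoTree.exists_labelling`), and a walk shows at most
one label more than the number of times it visits `{a, b}` (`card_labels_le`).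
-/

open SimpleGraph

/-- `IsTwoTree V G` : the simple graph `G` on `ℕ` with support (vertex set) `V` is a 2-tree,
defined inductively: a single edge is a 2-tree, and adding a new vertex `z` adjacent to
exactly the two endpoints `u, v` of an existing edge yields a 2-tree. -/
inductive IsTwoTree : Finset ℕ → SimpleGraph ℕ → Prop
  | base (u v : ℕ) (huv : u ≠ v) :
      IsTwoTree {u, v} (fromEdgeSet {s(u, v)})
  | grow {V : Finset ℕ} {G : SimpleGraph ℕ} (hG : IsTwoTree V G)
      (u v z : ℕ) (huv : G.Adj u v) (hz : z ∉ V) (hzu : z ≠ u) (hzv : z ≠ v) :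
      IsTwoTree (insert z V) (G ⊔ fromEdgeSet {s(z, u), s(z, v)})


/-- `H` (with vertex set `W`) is an `n`-pyramid: a 2-tree on `n + 2` vertices having an
edge `uv` such that `u` and `v` have exactly `n` common neighbors. -/
def IsNPyramid (n : ℕ) (W : Finset ℕ) (H : SimpleGraph ℕ) : Prop :=
  IsTwoTree W H ∧ W.card = n + 2 ∧
    ∃ u v, H.Adj u v ∧ (H.neighborSet u ∩ H.neighborSet v).ncard = n

/-- `G` (with vertex set `V`) contains an `n`-pyramid as an induced subgraph: there is a
set of vertices `W ⊆ V` on which `G` induces an `n`-pyramid. -/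
def ContainsNPyramid (V : Finset ℕ) (G : SimpleGraph ℕ) (n : ℕ) : Prop :=
  ∃ (W : Finset ℕ) (H : SimpleGraph ℕ), W ⊆ V ∧ IsNPyramid n W H ∧
    ∀ a b, a ∈ W → b ∈ W → (G.Adj a b ↔ H.Adj a b)

/-- `p` is a Hamiltonian path of the graph `G` with vertex set `V`: a path whose support
is exactly `V`. -/
def IsHamPathOn (V : Finset ℕ) {G : SimpleGraph ℕ} {s t : ℕ} (p : G.Walk s t) : Prop :=
  p.IsPath ∧ ∀ x, x ∈ p.support ↔ x ∈ V

/-- `p` is a Hamiltonian cycle of the graph `G` with vertex set `V`: a cycle whose support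
is exactly `V`. -/
def IsHamCycleOn (V : Finset ℕ) {G : SimpleGraph ℕ} {a : ℕ} (p : G.Walk a a) : Prop :=
  p.IsCycle ∧ ∀ x, x ∈ p.support ↔ x ∈ V


theorem IsTwoTree.mem_of_adj {V : Finset ℕ} {G : SimpleGraph ℕ} (hG : IsTwoTree V G) :
    ∀ {x y : ℕ}, G.Adj x y → x ∈ V := by
  induction hG with
  | base u v huv =>
    intro x y h
    simp only [fromEdgeSet_adj, Set.mem_singleton_iff, Sym2.eq_iff] at h
    simp only [Finset.mem_insert, Finset.mem_singleton]
    tauto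
  | grow hG u v z huv hz hzu hzv ih =>
    intro x y h
    have hu := ih huv
    have hv := ih huv.symm
    simp only [sup_adj, fromEdgeSet_adj, Set.mem_insert_iff, Set.mem_singleton_iff,
      Sym2.eq_iff] at h
    rw [Finset.mem_insert]
    rcases h with h | ⟨h, -⟩
    · exact Or.inr (ih h)
    · rcases h with (⟨rfl, -⟩ | ⟨rfl, -⟩) | (⟨rfl, -⟩ | ⟨rfl, -⟩) <;> tauto

/-- For an edge `ab` of a 2-tree there is a labelling that is constant on the components of
`G - {a, b}` and takes the value `w` on the component of each common neighbour `w`; in particular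
distinct common neighbours lie in distinct components. -/
theorem IsTwoTree.exists_labelling {V : Finset ℕ} {G : SimpleGraph ℕ} (hG : IsTwoTree V G) :
    ∀ {a b : ℕ}, G.Adj a b → ∃ f : ℕ → ℕ,
      (∀ x y, G.Adj x y → x ≠ a → x ≠ b → y ≠ a → y ≠ b → f x = f y) ∧
      ∀ w, G.Adj a w → G.Adj b w → f w = w := by
  induction hG with
  | base u v huv =>
    intro a b h
    refine ⟨id, ?_, fun _ _ _ => rfl⟩
    intro x y hxy
    simp only [fromEdgeSet_adj, Set.mem_singleton_iff, Sym2.eq_iff] at h hxy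
    grind
  | @grow V G hG u v z huv hz hzu hzv ih =>
    have hadj : ∀ x y, (G ⊔ fromEdgeSet {s(z, u), s(z, v)}).Adj x y ↔
        G.Adj x y ∨ (x = z ∧ (y = u ∨ y = v)) ∨ (y = z ∧ (x = u ∨ x = v)) := by
      intro x y
      simp only [sup_adj, fromEdgeSet_adj, Set.mem_insert_iff, Set.mem_singleton_iff,
        Sym2.eq_iff]
      grind
    have hzl : ∀ y, ¬ G.Adj z y := fun y h => hz (hG.mem_of_adj h)
    have hzr : ∀ y, ¬ G.Adj y z := fun y h => hzl y h.symm
    intro a b hab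
    simp only [hadj] at hab ⊢
    rcases hab with hab | hab
    · obtain ⟨f, hf, hw⟩ := ih hab
      have haz : a ≠ z := fun h => hzl b (h ▸ hab)
      have hbz : b ≠ z := fun h => hzr a (h ▸ hab)
      have hne := hab.ne
      have huv' := huv.ne
      -- The new vertex joins the component of an attachment vertex outside `{a, b}`,
      -- and forms a component of its own if there is none.
      by_cases hu : u = a ∨ u = b
      · by_cases hv : v = a ∨ v = b
        · refine ⟨Function.update f z z, ?_, ?_⟩
          · intro x y h
            simp only [Function.update_apply]
            grind
          · intro w h1 h2
            simp only [Function.update_apply]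
            grind
        · refine ⟨Function.update f z (f v), ?_, ?_⟩
          · intro x y h
            simp only [Function.update_apply]
            grind
          · intro w h1 h2
            simp only [Function.update_apply]
            grind
      · have hfuv : v ≠ a → v ≠ b → f u = f v := fun h1 h2 =>
          hf u v huv (by tauto) (by tauto) h1 h2
        refine ⟨Function.update f z (f u), ?_, ?_⟩
        · intro x y h
          simp only [Function.update_apply]
          grind
        · intro w h1 h2
          simp only [Function.update_apply]
          grind
    · -- A new edge `zu` or `zv` has one common neighbour only: the other of `u`, `v`.
      have huv' := huv.ne
      by_cases hu : a = u ∨ b = u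
      · exact ⟨fun _ => v, fun _ _ _ _ _ _ _ => rfl, by grind [SimpleGraph.irrefl]⟩
      · exact ⟨fun _ => u, fun _ _ _ _ _ _ _ => rfl, by grind [SimpleGraph.irrefl]⟩

/-- If `f` is constant along the edges that avoid `S`, then the visits of a walk to `S` cut it into
segments of constant label. A walk starting in `S` has at most as many segments as visits, and any
other walk at most one more. -/
theorem card_labels_le {G : SimpleGraph ℕ} (S : Finset ℕ) (f : ℕ → ℕ)
    (hf : ∀ x y, G.Adj x y → x ∉ S → y ∉ S → f x = f y) {s t : ℕ} (p : G.Walk s t) :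
    ((p.support.toFinset.filter (· ∉ S)).image f).card ≤
      (if s ∈ S then 0 else 1) + p.support.countP (· ∈ S) := by
  induction p with
  | @nil u => by_cases h : u ∈ S <;> simp [h, Finset.filter_singleton]
  | @cons x y t h p ih =>
    rw [Walk.support_cons, List.toFinset_cons, Finset.filter_insert, List.countP_cons]
    by_cases hx : x ∈ S
    · simp only [hx, not_true_eq_false, if_false, if_true, decide_true]
      split_ifs at ih <;> omega
    · simp only [hx, not_false_eq_true, if_true, if_false, decide_false, Finset.image_insert]
      by_cases hy : y ∈ S
      · rw [if_pos hy] at ih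
        refine (Finset.card_insert_le _ _).trans ?_
        simp
        omega
      · rw [if_neg hy] at ih
        rw [Finset.insert_eq_of_mem]
        · simpa using ih
        · exact Finset.mem_image.2 ⟨y, by simp [hy], (hf x y h hx hy).symm⟩

/-- If a 2-tree contains a 4-pyramid as an induced subgraph, then it has no
Hamiltonian path. -/
theorem four_pyramid_implies_no_hamiltonian_path
    (V : Finset ℕ) (G : SimpleGraph ℕ) (hG : IsTwoTree V G)
    (h4 : ContainsNPyramid V G 4) :
    ¬ ∃ (s t : ℕ) (p : G.Walk s t), IsHamPathOn V p := by
  rintro ⟨s, t, p, hp, hsupp⟩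
  obtain ⟨W, H, hWV, ⟨hH, -, a, b, hab, hcard⟩, hind⟩ := h4
  have hHG : ∀ x y, H.Adj x y → G.Adj x y := fun x y h =>
    (hind x y (hH.mem_of_adj h) (hH.mem_of_adj h.symm)).2 h
  obtain ⟨f, hf, hw⟩ := hG.exists_labelling (hHG a b hab)
  have hle := card_labels_le {a, b} f
    (fun x y h hx hy => by
      simp only [Finset.mem_insert, Finset.mem_singleton, not_or] at hx hy
      exact hf x y h hx.1 hx.2 hy.1 hy.2) p
  have hcount : p.support.countP (· ∈ ({a, b} : Finset ℕ)) ≤ 2 := by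
    rw [List.countP_eq_length_filter,
      ← List.toFinset_card_of_nodup (hp.support_nodup.filter _)]
    refine (Finset.card_le_card (t := {a, b}) ?_).trans Finset.card_le_two
    intro x hx
    simpa using (List.mem_filter.1 (List.mem_toFinset.1 hx)).2
  -- Each common neighbour is its own label, so at least four labels occur.
  have hsub : H.neighborSet a ∩ H.neighborSet b ⊆
      ((p.support.toFinset.filter (· ∉ ({a, b} : Finset ℕ))).image f : Finset ℕ) := by
    rintro w ⟨h1, h2⟩
    rw [mem_neighborSet] at h1 h2
    refine Finset.mem_coe.2 (Finset.mem_image.2 ⟨w, ?_, hw w (hHG _ _ h1) (hHG _ _ h2)⟩)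
    simp only [Finset.mem_filter, List.mem_toFinset, hsupp, Finset.mem_insert,
      Finset.mem_singleton, not_or]
    exact ⟨hWV (hH.mem_of_adj h1.symm), h1.ne', h2.ne'⟩
  have hge := Set.ncard_le_ncard hsub (Finset.finite_toSet _)
  rw [Set.ncard_coe_finset, hcard] at hge
  split_ifs at hle <;> omega
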